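/- Fix λ > 0 and let y : (0,∞) → [0,∞) be a C¹ function with y′(z) = y(z)² − λ r(z)² for all z > 0, y(z) → 0 as z → ∞, and y integrable on (0,1). Then for every v > 0: λ ∫_0^∞ (1/ω(z)) exp{ −m(z) − ∫_0^{I(z)} y(s) ds } ( ∫_0^{z∧v} exp{ m(u) + 2∫_0^{I(u)} y(s) ds } du ) dz = exp{ ∫_0^{I(v)} y(s) ds } − 1. Consequently, if in addition ∫_0^∞ y(s) ds < ∞, then letting v → ∞ gives 1 + λ ∫_0^∞ (1/ω(z)) exp{ −m(z) − ∫_0^{I(z)} y(s) ds } ( ∫_0^{z} exp{ m(u) + 2∫_0^{I(u)} y(s) ds } du ) dz = exp{ ∫_0^∞ y(s) ds }. -/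

import Mathlib

open MeasureTheory Set

/-- Tonelli step. -/
lemma aux_tonelli (g h F : ℝ → ℝ) (lam : ℝ) (A : Set ℝ) (hA : MeasurableSet A)
    (hAs : A ⊆ Ioi 0)
    (hg : ContinuousOn g (Ioi 0)) (hh : ContinuousOn h (Ioi 0))
    (hg0 : ∀ z ∈ Ioi (0:ℝ), 0 ≤ g z) (hh0 : ∀ z ∈ Ioi (0:ℝ), 0 ≤ h z)
    (hF : ∀ u ∈ Ioi (0:ℝ), ∫⁻ z in Ioi u, ENNReal.ofReal (g z) = ENNReal.ofReal (F u / lam))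
    (hint : ∀ z ∈ Ioi (0:ℝ), IntegrableOn h (A ∩ Iio z)) :
    ∫ z in Ioi (0:ℝ), g z * ∫ u in A ∩ Iio z, h u
      = (∫⁻ u in A, ENNReal.ofReal (h u * (F u / lam))).toReal := by
  have hgm : AEMeasurable (fun z => ENNReal.ofReal (g z)) (volume.restrict (Ioi 0)) :=
    (hg.aemeasurable measurableSet_Ioi).ennreal_ofReal
  have hhm : AEMeasurable (fun z => ENNReal.ofReal (h z)) (volume.restrict A) :=
    ((hh.mono hAs).aemeasurable hA).ennreal_ofReal
  have key : ∀ z ∈ Ioi (0:ℝ), ENNReal.ofReal (g z * ∫ u in A ∩ Iio z, h u)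
      = ∫⁻ u in A, (if u < z then ENNReal.ofReal (h u) * ENNReal.ofReal (g z) else 0) := by
    intro z hz
    have e1 : (fun u => (if u < z then ENNReal.ofReal (h u) * ENNReal.ofReal (g z) else 0))
        = (Iio z).indicator (fun u => ENNReal.ofReal (h u) * ENNReal.ofReal (g z)) := by
      ext u; simp [indicator]
    rw [e1, lintegral_indicator measurableSet_Iio, Measure.restrict_restrict measurableSet_Iio,
      inter_comm, lintegral_mul_const' _ _ ENNReal.ofReal_ne_top,
      ENNReal.ofReal_mul (hg0 z hz), mul_comm]
    congr 1
    rw [inter_comm, ofReal_integral_eq_lintegral_ofReal (hint z hz)]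
    refine (ae_restrict_iff' (hA.inter measurableSet_Iio)).2 (Filter.Eventually.of_forall ?_)
    intro u hu
    exact hh0 u (hAs hu.1)
  have nn : ∀ z ∈ Ioi (0:ℝ), 0 ≤ g z * ∫ u in A ∩ Iio z, h u := by
    intro z hz
    exact mul_nonneg (hg0 z hz) (setIntegral_nonneg (hA.inter measurableSet_Iio)
      (fun u hu => hh0 u (hAs hu.1)))
  have hprod : AEMeasurable (Function.uncurry (fun z u : ℝ =>
      (if u < z then ENNReal.ofReal (h u) * ENNReal.ofReal (g z) else 0)))
      ((volume.restrict (Ioi (0:ℝ))).prod (volume.restrict A)) := by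
    have : (Function.uncurry (fun z u : ℝ =>
      (if u < z then ENNReal.ofReal (h u) * ENNReal.ofReal (g z) else 0)))
      = {p : ℝ × ℝ | p.2 < p.1}.indicator
        (fun p => ENNReal.ofReal (h p.2) * ENNReal.ofReal (g p.1)) := by
      ext ⟨z, u⟩; simp [indicator]
    rw [this]
    refine AEMeasurable.indicator ?_ (measurableSet_lt measurable_snd measurable_fst)
    exact (hhm.comp_snd).mul (hgm.comp_fst)
  have swap := lintegral_lintegral_swap hprod
  have inner : ∀ u ∈ A, ∫⁻ z in Ioi (0:ℝ),
      (if u < z then ENNReal.ofReal (h u) * ENNReal.ofReal (g z) else 0)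
      = ENNReal.ofReal (h u * (F u / lam)) := by
    intro u hu
    have hu0 : (0:ℝ) < u := hAs hu
    have e1 : (fun z => (if u < z then ENNReal.ofReal (h u) * ENNReal.ofReal (g z) else 0))
        = (Ioi u).indicator (fun z => ENNReal.ofReal (h u) * ENNReal.ofReal (g z)) := by
      ext z; simp [indicator]
    rw [e1, lintegral_indicator measurableSet_Ioi, Measure.restrict_restrict measurableSet_Ioi,
      inter_eq_left.2 (Ioi_subset_Ioi hu0.le), lintegral_const_mul' _ _ ENNReal.ofReal_ne_top,
      hF u hu0, ENNReal.ofReal_mul (hh0 u hu0)]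
  rw [setLIntegral_congr_fun hA inner] at swap
  rw [← swap, ← setLIntegral_congr_fun measurableSet_Ioi key]
  have hmeas : AEMeasurable (fun z => g z * ∫ u in A ∩ Iio z, h u) (volume.restrict (Ioi 0)) := by
    have h1 : AEMeasurable (fun z => ENNReal.ofReal (g z * ∫ u in A ∩ Iio z, h u))
        (volume.restrict (Ioi 0)) := by
      refine AEMeasurable.congr (hprod.lintegral_prod_right') ?_
      refine (ae_restrict_iff' measurableSet_Ioi).2 (Filter.Eventually.of_forall ?_)
      intro z hz
      exact (key z hz).symm
    refine h1.ennreal_toReal.congr ?_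
    refine (ae_restrict_iff' measurableSet_Ioi).2 (Filter.Eventually.of_forall ?_)
    intro z hz
    exact ENNReal.toReal_ofReal (nn z hz)
  rw [integral_eq_lintegral_of_nonneg_ae _ hmeas.aestronglyMeasurable]
  exact (ae_restrict_iff' measurableSet_Ioi).2 (Filter.Eventually.of_forall nn)

/-- continuity of ψ away from zero. -/
lemma aux_psi (b γ : ℝ) (μ : Measure ℝ)
    (hμ2 : ∫⁻ x in Ioi (0:ℝ), ENNReal.ofReal (min 1 (x ^ 2)) ∂μ < ⊤)
    (ψ : ℝ → ℝ)
    (hψ : ∀ u, ψ u = -(b * u) + γ ^ 2 * u ^ 2 +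
      ∫ x in Ioi (0:ℝ), (Real.exp (-(u * x)) - 1 + (if x < 1 then u * x else 0)) ∂μ) :
    ContinuousOn ψ (Ioi 0) := by
  have hi : IntegrableOn (fun x : ℝ => min 1 (x ^ 2)) (Ioi 0) μ := by
    refine ⟨(by fun_prop : Measurable fun x : ℝ => min 1 (x ^ 2)).aestronglyMeasurable, ?_⟩
    rw [hasFiniteIntegral_iff_ofReal]
    · exact hμ2
    · exact Filter.Eventually.of_forall (fun x => by positivity)
  have e : ψ = fun u => -(b * u) + γ ^ 2 * u ^ 2 +
      ∫ x in Ioi (0:ℝ), (Real.exp (-(u * x)) - 1 + (if x < 1 then u * x else 0)) ∂μ := funext hψ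
  rw [e]
  refine ContinuousOn.add (by fun_prop) ?_
  intro u0 hu0
  have hu0' : (0:ℝ) < u0 := hu0
  refine ContinuousAt.continuousWithinAt ?_
  refine continuousAt_of_dominated (bound := fun x => ((u0 + 1) ^ 2 + 1) * min 1 (x ^ 2)) ?_ ?_
    (hi.const_mul _) ?_
  · refine Filter.Eventually.of_forall (fun u => ?_)
    refine Measurable.aestronglyMeasurable ?_
    refine Measurable.add (by fun_prop) ?_
    exact Measurable.ite measurableSet_Iio (by fun_prop) (by fun_prop)
  · filter_upwards [Ioo_mem_nhds hu0' (lt_add_one u0)] with u hu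
    refine (ae_restrict_iff' measurableSet_Ioi).2 (Filter.Eventually.of_forall ?_)
    intro x hx
    have hx : (0:ℝ) < x := hx
    have hux : 0 < u * x := mul_pos hu.1 hx
    have h1 : 1 - u * x ≤ Real.exp (-(u * x)) := Real.one_sub_le_exp_neg _
    have h2 : Real.exp (-(u * x)) ≤ 1 - u * x + (u * x) ^ 2 := by
      have h3 : 1 + u * x ≤ Real.exp (u * x) := by linarith [Real.add_one_le_exp (u * x)]
      have h4 : Real.exp (-(u * x)) ≤ (1 + u * x)⁻¹ := by
        rw [Real.exp_neg]; gcongr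
      refine h4.trans ?_
      rw [inv_le_iff_one_le_mul₀ (by positivity)]
      nlinarith [pow_pos hux 3]
    have h5 : Real.exp (-(u * x)) ≤ 1 := Real.exp_le_one_iff.2 (by linarith)
    have h6 := Real.exp_pos (-(u * x))
    rw [Real.norm_eq_abs, abs_le]
    by_cases hx1 : x < 1
    · rw [if_pos hx1, min_eq_right (by nlinarith)]
      have : (u * x) ^ 2 ≤ (u0 + 1) ^ 2 * x ^ 2 := by
        rw [mul_pow]; have := hu.1.le; have := hu.2.le; gcongr
      constructor <;> nlinarith [sq_nonneg x, sq_nonneg ((u0 + 1) * x)]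
    · rw [if_neg hx1, min_eq_left (by nlinarith)]
      constructor <;> nlinarith [sq_nonneg (u0 + 1)]
  · refine Filter.Eventually.of_forall (fun x => ?_)
    by_cases hx1 : x < 1
    · simp only [if_pos hx1]; fun_prop
    · simp only [if_neg hx1]; fun_prop

/-- The primitive from 0 of a function continuous on the open half line is continuous on the
closed one. -/
lemma aux_int (f : ℝ → ℝ) (hf : ContinuousOn f (Ioi 0)) (a : ℝ) (ha : 0 < a)
    (h : IntervalIntegrable f volume 0 a) (t : ℝ) (ht : 0 ≤ t) :
    IntervalIntegrable f volume 0 t := by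
  rcases eq_or_lt_of_le ht with rfl | ht
  · simp
  · refine h.trans (ContinuousOn.intervalIntegrable (hf.mono ?_))
    intro x hx
    exact lt_of_lt_of_le (lt_min ha ht) hx.1

lemma aux_prim (f : ℝ → ℝ) 
    (h : ∀ t, 0 ≤ t → IntervalIntegrable f volume 0 t) :
    ContinuousOn (fun t => ∫ s in (0:ℝ)..t, f s) (Ici 0) := by
  intro t ht
  have ht : (0:ℝ) ≤ t := ht
  have h1 : ContinuousOn (fun t => ∫ s in (0:ℝ)..t, f s) (uIcc 0 (t + 1)) := by
    refine intervalIntegral.continuousOn_primitive_interval ?_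
    have := h (t + 1) (by linarith)
    rwa [intervalIntegrable_iff_integrableOn_Icc_of_le (by linarith),
      ← uIcc_of_le (by linarith)] at this
  have h2 := h1 t (by rw [uIcc_of_le (by linarith)]; exact ⟨ht, by linarith⟩)
  rw [uIcc_of_le (by linarith)] at h2
  refine h2.mono_of_mem_nhdsWithin ?_
  have : Icc 0 (t + 1) = Ici 0 ∩ Iic (t + 1) := rfl
  rw [this]
  exact Filter.inter_mem self_mem_nhdsWithin (mem_nhdsWithin_of_mem_nhds (Iic_mem_nhds (by linarith)))

lemma aux_deriv (f : ℝ → ℝ) (hf : ContinuousOn f (Ioi 0))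
    (h : ∀ t, 0 ≤ t → IntervalIntegrable f volume 0 t) (t : ℝ) (ht : 0 < t) :
    HasDerivAt (fun t => ∫ s in (0:ℝ)..t, f s) (f t) t :=
  intervalIntegral.integral_hasDerivAt_right (h t ht.le)
    (hf.stronglyMeasurableAtFilter isOpen_Ioi t ht) (hf.continuousAt (Ioi_mem_nhds ht))

lemma aux_m (f m : ℝ → ℝ) (hf : ContinuousOn f (Ioi 0))
    (hm : ∀ lam, m lam = ∫ u in (0:ℝ)..lam, f u) : ContinuousOn m (Ici 0) := by
  by_cases h : IntervalIntegrable f volume 0 1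
  · rw [show m = fun lam => ∫ u in (0:ℝ)..lam, f u from funext hm]
    exact aux_prim f (aux_int f hf 1 one_pos h)
  · refine (continuousOn_const (c := (0:ℝ))).congr ?_
    intro t ht
    rw [hm]
    rcases eq_or_lt_of_le (show (0:ℝ) ≤ t from ht) with rfl | ht
    · simp
    · refine intervalIntegral.integral_undef (fun h' => h ?_)
      exact aux_int f hf t ht h' 1 zero_le_one



/-- With y a non-negative C¹ solution of y′ = y² − λr² vanishing at ∞ and integrable at 0,
for every v > 0:
λ∫_0^∞ (1/ω(z)) exp{−m(z) − ∫_0^{I(z)} y} (∫_0^{z∧v} exp{m(u) + 2∫_0^{I(u)} y} du) dz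
= exp{∫_0^{I(v)} y} − 1; and if moreover ∫_0^∞ y < ∞, then
1 + λ∫_0^∞ (1/ω(z)) exp{−m(z) − ∫_0^{I(z)} y} (∫_0^z exp{m(u) + 2∫_0^{I(u)} y} du) dz
= exp{∫_0^∞ y}. -/
theorem stmt_19
    (b γ c σ : ℝ) (μ : Measure ℝ)
    (hγ : 0 ≤ γ) (hc : 0 < c) (hσ : 0 < σ)
    (hμ0 : μ (Iic 0) = 0)
    (hμ2 : ∫⁻ x in Ioi (0:ℝ), ENNReal.ofReal (min 1 (x ^ 2)) ∂μ < ⊤)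
    (hμlog : ∫⁻ x in Ioi (1:ℝ), ENNReal.ofReal (Real.log x) ∂μ < ⊤)
    (ψ ω m I Iinv r : ℝ → ℝ)
    (hψ : ∀ u, ψ u = -(b * u) + γ ^ 2 * u ^ 2 +
      ∫ x in Ioi (0:ℝ), (Real.exp (-(u * x)) - 1 + (if x < 1 then u * x else 0)) ∂μ)
    (hgen : ∃ ϑ : ℝ, 0 ≤ ϑ ∧ ∀ z, ϑ ≤ z → 0 < ψ z)
    (hω : ∀ z, ω z = c * z + σ ^ 2 * z ^ 2 / 2)
    (hm : ∀ lam, m lam = ∫ u in (0:ℝ)..lam, ψ u / ω u)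
    (hI : ∀ lam, I lam = ∫ u in (0:ℝ)..lam, Real.exp (m u))
    (hIinv_left : ∀ x, 0 ≤ x → Iinv (I x) = x)
    (hIinv_right : ∀ z, 0 ≤ z → I (Iinv z) = z)
    (hr : ∀ z, r z = Real.exp (-(m (Iinv z))) / Real.sqrt (ω (Iinv z)))
    (lam : ℝ) (hlam : 0 < lam)
    (y : ℝ → ℝ)
    (hy : ∀ z ∈ Ioi (0:ℝ), 0 ≤ y z ∧ HasDerivAt y ((y z) ^ 2 - lam * (r z) ^ 2) z)
    (hy0 : Filter.Tendsto y Filter.atTop (nhds 0))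
    (hyint : IntegrableOn y (Ioo 0 1) volume) :
    (∀ v : ℝ, 0 < v →
      lam * ∫ z in Ioi (0:ℝ),
          (1 / ω z) * Real.exp (-(m z) - ∫ s in (0:ℝ)..(I z), y s) *
            (∫ u in (0:ℝ)..(min z v),
              Real.exp (m u + 2 * ∫ s in (0:ℝ)..(I u), y s))
        = Real.exp (∫ s in (0:ℝ)..(I v), y s) - 1) ∧
    (IntegrableOn y (Ioi 0) volume →
      1 + lam * ∫ z in Ioi (0:ℝ),
          (1 / ω z) * Real.exp (-(m z) - ∫ s in (0:ℝ)..(I z), y s) *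
            (∫ u in (0:ℝ)..z,
              Real.exp (m u + 2 * ∫ s in (0:ℝ)..(I u), y s))
        = Real.exp (∫ s in Ioi (0:ℝ), y s)) := by
  have hψc := aux_psi b γ μ hμ2 ψ hψ
  have hωpos : ∀ z, 0 < z → 0 < ω z := by
    intro z hz; rw [hω]; positivity
  have hωc : Continuous ω := by
    rw [show ω = _ from funext hω]; fun_prop
  have hmc : ContinuousOn m (Ici 0) := aux_m (fun u => ψ u / ω u) m
    (hψc.div hωc.continuousOn (fun z hz => (hωpos z hz).ne')) hm
  have hmo : ContinuousOn m (Ioi 0) := hmc.mono Ioi_subset_Ici_self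
  have hec : ContinuousOn (fun u => Real.exp (m u)) (Ici 0) := hmc.rexp
  have hei : ∀ t, 0 ≤ t → IntervalIntegrable (fun u => Real.exp (m u)) volume 0 t := by
    intro t ht
    refine ContinuousOn.intervalIntegrable (hec.mono ?_)
    rw [uIcc_of_le ht]; exact Icc_subset_Ici_self
  have hIe : I = fun t => ∫ u in (0:ℝ)..t, Real.exp (m u) := funext hI
  have hIc : ContinuousOn I (Ici 0) := by rw [hIe]; exact aux_prim _ hei
  have hI0 : I 0 = 0 := by rw [hI]; simp
  have hId : ∀ z, 0 < z → HasDerivAt I (Real.exp (m z)) z := by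
    intro z hz; rw [hIe]
    exact aux_deriv _ (hec.mono Ioi_subset_Ici_self) hei z hz
  have hImono : StrictMonoOn I (Ici 0) := by
    refine strictMonoOn_of_deriv_pos (convex_Ici 0) hIc ?_
    intro z hz
    rw [interior_Ici] at hz
    rw [(hId z hz).deriv]; exact Real.exp_pos _
  have hIpos : ∀ z, 0 < z → 0 < I z := by
    intro z hz
    have := hImono (mem_Ici.2 le_rfl) (mem_Ici.2 hz.le) hz
    rwa [hI0] at this
  have hInn : ∀ z, 0 ≤ z → 0 ≤ I z := by
    intro z hz
    rcases eq_or_lt_of_le hz with rfl | h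
    · exact hI0.ge
    · exact (hIpos z h).le
  have hItop : Filter.Tendsto I Filter.atTop Filter.atTop := by
    rw [Filter.tendsto_atTop]
    intro B
    have hB : (0:ℝ) < max B 1 := lt_max_of_lt_right one_pos
    have h1 := hIinv_right _ hB.le
    have h2 : 0 ≤ Iinv (max B 1) := by
      by_contra hneg
      push Not at hneg
      have : I (Iinv (max B 1)) ≤ 0 := by
        rw [hI, intervalIntegral.integral_symm]
        have := intervalIntegral.integral_nonneg (f := fun u => Real.exp (m u)) (μ := volume)
          hneg.le (fun u _ => (Real.exp_pos _).le)
        linarith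
      linarith
    filter_upwards [Filter.eventually_ge_atTop (Iinv (max B 1))] with x hx
    have := hImono.monotoneOn (mem_Ici.2 h2) (mem_Ici.2 (h2.trans hx)) hx
    rw [h1] at this
    exact (le_max_left _ _).trans this
  have hyc : ContinuousOn y (Ioi 0) := fun z hz => (hy z hz).2.continuousAt.continuousWithinAt
  have hyi : ∀ t, 0 ≤ t → IntervalIntegrable y volume 0 t := by
    refine aux_int y hyc 1 one_pos ?_
    rwa [intervalIntegrable_iff_integrableOn_Ioo_of_le zero_le_one]
  set P : ℝ → ℝ := fun t => ∫ s in (0:ℝ)..t, y s with hP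
  have hPc : ContinuousOn P (Ici 0) := aux_prim y hyi
  have hPd : ∀ t, 0 < t → HasDerivAt P (y t) t := aux_deriv y hyc hyi
  have hPnn : ∀ t, 0 ≤ t → 0 ≤ P t := by
    intro t ht
    refine intervalIntegral.integral_nonneg_of_ae_restrict ht ?_
    rw [← restrict_Ioc_eq_restrict_Icc]
    exact (ae_restrict_iff' measurableSet_Ioc).2 (Filter.Eventually.of_forall
      (fun s hs => (hy s hs.1).1))
  set J : ℝ → ℝ := fun z => P (I z) with hJ
  have hJc : ContinuousOn J (Ici 0) := hPc.comp hIc (fun z hz => hInn z hz)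
  have hJo : ContinuousOn J (Ioi 0) := hJc.mono Ioi_subset_Ici_self
  have hJd : ∀ z, 0 < z → HasDerivAt J (y (I z) * Real.exp (m z)) z := by
    intro z hz
    exact (hPd (I z) (hIpos z hz)).comp z (hId z hz)
  have hJ0 : J 0 = 0 := by simp [hJ, hP, hI0]
  set g : ℝ → ℝ := fun z => (1 / ω z) * Real.exp (-(m z) - J z) with hg
  set h : ℝ → ℝ := fun u => Real.exp (m u + 2 * J u) with hh
  set F : ℝ → ℝ := fun z => Real.exp (-(J z)) * y (I z) with hF
  have hgc : ContinuousOn g (Ioi 0) := by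
    refine ContinuousOn.mul ?_ ((hmo.neg.sub hJo).rexp)
    exact continuousOn_const.div hωc.continuousOn (fun z hz => (hωpos z hz).ne')
  have hg0 : ∀ z ∈ Ioi (0:ℝ), 0 ≤ g z := by
    intro z hz
    exact mul_nonneg (one_div_nonneg.2 (hωpos z hz).le) (Real.exp_pos _).le
  have hhc : ContinuousOn h (Ici 0) := (hmc.add (continuousOn_const.mul hJc)).rexp
  have hFd : ∀ z, 0 < z → HasDerivAt F (-(lam * g z)) z := by
    intro z hz
    have h1 := (hJd z hz).neg.exp
    have h2 := ((hy (I z) (hIpos z hz)).2).comp z (hId z hz)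
    have h3 := h1.mul h2
    refine h3.congr_deriv ?_
    have hw := hωpos z hz
    simp only [Function.comp, hr, hIinv_left z hz.le, hg, Pi.neg_apply]
    rw [div_pow, Real.sq_sqrt hw.le, sub_eq_add_neg (-(m z)), Real.exp_add, Real.exp_neg (m z)]
    have := Real.exp_pos (m z)
    field_simp
    ring
  have hFt : Filter.Tendsto F Filter.atTop (nhds 0) := by
    have h1 : Filter.Tendsto (fun z => y (I z)) Filter.atTop (nhds 0) := hy0.comp hItop
    refine squeeze_zero' ?_ ?_ h1
    · filter_upwards [Filter.eventually_gt_atTop 0] with z hz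
      exact mul_nonneg (Real.exp_pos _).le (hy _ (hIpos z hz)).1
    · filter_upwards [Filter.eventually_gt_atTop 0] with z hz
      have : Real.exp (-(J z)) ≤ 1 := Real.exp_le_one_iff.2 (by
        have := hPnn _ (hInn z hz.le); simp only [hJ]; linarith)
      exact mul_le_of_le_one_left (hy _ (hIpos z hz)).1 this
  have hFl : ∀ u ∈ Ioi (0:ℝ),
      ∫⁻ z in Ioi u, ENNReal.ofReal (g z) = ENNReal.ofReal (F u / lam) := by
    intro u hu
    have hu : (0:ℝ) < u := hu
    have hd : ∀ z ∈ Ioi u, HasDerivAt (fun z => -(F z / lam)) (g z) z := by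
      intro z hz
      refine ((hFd z (hu.trans hz)).div_const lam).neg.congr_deriv ?_
      field_simp
    have hcw : ContinuousWithinAt (fun z => -(F z / lam)) (Ici u) u :=
      ((hFd u hu).div_const lam).neg.continuousAt.continuousWithinAt
    have hlim : Filter.Tendsto (fun z => -(F z / lam)) Filter.atTop (nhds 0) := by
      simpa using (hFt.div_const lam).neg
    have hpos : ∀ z ∈ Ioi u, 0 ≤ g z := fun z hz => hg0 z (hu.trans hz)
    have hint := integrableOn_Ioi_deriv_of_nonneg hcw hd hpos hlim
    have hval := integral_Ioi_of_hasDerivAt_of_nonneg hcw hd hpos hlim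
    rw [← ofReal_integral_eq_lintegral_ofReal hint
      ((ae_restrict_iff' measurableSet_Ioi).2 (Filter.Eventually.of_forall hpos)), hval]
    simp
  have hhint : ∀ z, 0 ≤ z → IntegrableOn h (Ioc 0 z) := by
    intro z hz
    have : IntegrableOn h (Icc 0 z) := 
      (hhc.mono Icc_subset_Ici_self).integrableOn_compact isCompact_Icc
    exact this.mono_set Ioc_subset_Icc_self
  have hhF : ∀ u, h u * (F u / lam) = (y (I u) * Real.exp (m u) * Real.exp (J u)) / lam := by
    intro u
    simp only [hh, hF]
    rw [Real.exp_add, two_mul, Real.exp_add, Real.exp_neg]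
    field_simp
  have hEd : ∀ u, 0 < u → HasDerivAt (fun u => Real.exp (J u) / lam) (h u * (F u / lam)) u := by
    intro u hu
    refine ((hJd u hu).exp.div_const lam).congr_deriv ?_
    rw [hhF]; ring
  have hEc : ContinuousOn (fun u => Real.exp (J u) / lam) (Ici 0) := hJc.rexp.div_const lam
  have hEn : ∀ u ∈ Ioi (0:ℝ), 0 ≤ h u * (F u / lam) := by
    intro u hu
    rw [hhF]
    have := (hy _ (hIpos u hu)).1
    positivity
  constructor
  · intro v hv
    have T := aux_tonelli g h F lam (Ioc 0 v) measurableSet_Ioc (fun z hz => hz.1) hgc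
      (hhc.mono Ioi_subset_Ici_self) hg0 (fun z _ => (Real.exp_pos _).le) hFl
      (fun z hz => (hhint v hv.le).mono_set inter_subset_left)
    have hint : IntegrableOn (fun u => h u * (F u / lam)) (Ioc 0 v) :=
      intervalIntegral.integrableOn_deriv_of_nonneg (hEc.mono Icc_subset_Ici_self)
        (fun u hu => hEd u hu.1) (fun u hu => hEn u hu.1)
    have hval := intervalIntegral.integral_eq_sub_of_hasDerivAt_of_le hv.le
      (hEc.mono Icc_subset_Ici_self) (fun u hu => hEd u hu.1)
      ((intervalIntegrable_iff_integrableOn_Ioc_of_le hv.le).2 hint)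
    rw [← integral_eq_lintegral_of_nonneg_ae ((ae_restrict_iff' measurableSet_Ioc).2
      (Filter.Eventually.of_forall (fun u hu => hEn u hu.1))) hint.1,
      ← intervalIntegral.integral_of_le hv.le, hval, hJ0] at T
    have e : ∫ z in Ioi (0:ℝ), g z * ∫ u in (0:ℝ)..(min z v), h u
        = ∫ z in Ioi (0:ℝ), g z * ∫ u in Ioc 0 v ∩ Iio z, h u := by
      refine setIntegral_congr_fun measurableSet_Ioi (fun z hz => ?_)
      have hz : (0:ℝ) < z := hz
      rw [intervalIntegral.integral_of_le (le_min hz.le hv.le)]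
      congr 1
      refine setIntegral_congr_set ?_
      have : Ioc 0 (min z v) = Ioc 0 v ∩ Iic z := by
        ext x; simp only [mem_Ioc, mem_inter_iff, mem_Iic, le_min_iff]; tauto
      rw [this]
      exact (Filter.EventuallyEq.refl _ _).inter Iio_ae_eq_Iic.symm
    change lam * ∫ z in Ioi (0:ℝ), g z * ∫ u in (0:ℝ)..(min z v), h u = Real.exp (J v) - 1
    rw [e, T, Real.exp_zero]
    field_simp
  · intro hyI
    have T := aux_tonelli g h F lam (Ioi 0) measurableSet_Ioi (fun z hz => hz) hgc
      (hhc.mono Ioi_subset_Ici_self) hg0 (fun z _ => (Real.exp_pos _).le) hFl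
      (fun z hz => (hhint z (le_of_lt hz)).mono_set (fun x hx => ⟨hx.1, le_of_lt hx.2⟩))
    have hJt : Filter.Tendsto J Filter.atTop (nhds (∫ s in Ioi (0:ℝ), y s)) :=
      (intervalIntegral_tendsto_integral_Ioi 0 hyI Filter.tendsto_id).comp hItop
    have hEt : Filter.Tendsto (fun u => Real.exp (J u) / lam) Filter.atTop
        (nhds (Real.exp (∫ s in Ioi (0:ℝ), y s) / lam)) :=
      ((Real.continuous_exp.tendsto _).comp hJt).div_const lam
    have hcw := hEc 0 (mem_Ici.2 le_rfl)
    have hint := integrableOn_Ioi_deriv_of_nonneg hcw (fun u hu => hEd u hu) hEn hEt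
    have hval := integral_Ioi_of_hasDerivAt_of_nonneg hcw (fun u hu => hEd u hu) hEn hEt
    rw [← integral_eq_lintegral_of_nonneg_ae ((ae_restrict_iff' measurableSet_Ioi).2
      (Filter.Eventually.of_forall hEn)) hint.1, hval, hJ0] at T
    have e : ∫ z in Ioi (0:ℝ), g z * ∫ u in (0:ℝ)..z, h u
        = ∫ z in Ioi (0:ℝ), g z * ∫ u in Ioi 0 ∩ Iio z, h u := by
      refine setIntegral_congr_fun measurableSet_Ioi (fun z hz => ?_)
      have hz : (0:ℝ) < z := hz
      rw [intervalIntegral.integral_of_le hz.le, Ioi_inter_Iio, integral_Ioc_eq_integral_Ioo]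
    change 1 + lam * ∫ z in Ioi (0:ℝ), g z * ∫ u in (0:ℝ)..z, h u = _
    rw [e, T, Real.exp_zero]
    field_simp
    ring
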